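/- arXiv:1902.10267 — 2 statements merged into one kernel-verified Lean document; each statement's English description precedes it below -/
import Mathlib

section
/- Let n ∈ ℕ and let M, B : ℝ → Matrix (Fin n) (Fin n) ℝ with M differentiable and satisfying the Lax equation M'(t) = B(t) · M(t) - M(t) · B(t) for all t. Then for every natural number k, the function t ↦ trace((M(t))^k) is constant on ℝ. In particular the characteristic polynomial, and hence the spectrum, of M(t) is independent of t. -/
open Matrix

/-!
A commutator `[B, ·]` is a derivation of the matrix algebra, so every power of `M` again satisfies
the Lax equation, and commutators have trace zero: the traces of the powers are constant.
By Jacobi's formula `det N` has derivative `trace (adj N * [B, N])` along `N' = [B, N]`, and this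
vanishes because `adj N` commutes with `N`. Applied to `N = x - M`, which satisfies the same Lax
equation, this shows that all values of the characteristic polynomial are constant.
-/

section Algebra

variable {m R : Type*} [Fintype m] [DecidableEq m] [CommRing R]

lemma trace_adjugate_mul (N N' : Matrix m m R) :
    (N.adjugate * N').trace = ∑ j, (N.updateCol j (N'.col j)).det :=
  Finset.sum_congr rfl fun j _ => by
    rw [← cramer_apply, cramer_eq_adjugate_mulVec]
    rfl

lemma trace_adjugate_mul_commutator (N B : Matrix m m R) :
    (N.adjugate * (B * N - N * B)).trace = 0 := by
  rw [mul_sub, trace_sub, trace_mul_comm, Matrix.mul_assoc, mul_adjugate, ← Matrix.mul_assoc,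
    adjugate_mul, Matrix.mul_smul, Matrix.smul_mul, Matrix.mul_one, Matrix.one_mul, sub_self]

lemma spectrum_eq_of_charpoly_eq {N N' : Matrix m m R} (h : N.charpoly = N'.charpoly) :
    spectrum R N = spectrum R N' := by
  ext x
  have hdet : (scalar m x - N).det = (scalar m x - N').det := by
    rw [← eval_charpoly, h, eval_charpoly]
  simp only [spectrum.mem_iff, isUnit_iff_isUnit_det]
  exact hdet ▸ Iff.rfl

open Polynomial in
lemma eq_zero_of_forall_eval_algebraMap_eq_zero {K : Type*} [Field K] [Infinite K] [Algebra K R]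
    {p : R[X]} (h : ∀ x : K, p.eval (algebraMap K R x) = 0) : p = 0 := by
  ext i
  -- `R` need not be a domain, so the coefficients are tested against `K`-linear functionals.
  refine (Module.forall_dual_apply_eq_zero_iff K _).1 fun φ => ?_
  let q : K[X] := ∑ i ∈ Finset.range (p.natDegree + 1), monomial i (φ (p.coeff i))
  have hq : q = 0 := Polynomial.funext fun x => by
    have hx := congrArg φ (h x)
    simp only [eval_eq_sum_range, ← map_pow, mul_comm (p.coeff _), ← Algebra.smul_def, map_sum,
      map_smul, map_zero, smul_eq_mul] at hx
    simpa only [q, eval_finsetSum, eval_monomial, eval_zero, mul_comm] using hx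
  have hcoeff : q.coeff i = φ (p.coeff i) := by
    simp +contextual [q, coeff_monomial, coeff_eq_zero_of_natDegree_lt]
  rw [← hcoeff, hq, coeff_zero]

end Algebra

section Jacobi

variable {𝕜 m A : Type*} [NontriviallyNormedField 𝕜] [Fintype m] [DecidableEq m]
  [NormedCommRing A] [NormedAlgebra 𝕜 A]

theorem hasDerivAt_det {N : 𝕜 → Matrix m m A} {N' : Matrix m m A} {t : 𝕜}
    (hN : ∀ i j, HasDerivAt (fun s => N s i j) (N' i j) t) :
    HasDerivAt (fun s => (N s).det) ((N t).adjugate * N').trace t := by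
  have hprod (σ : Equiv.Perm m) : HasDerivAt (fun s => ∏ i, N s (σ i) i)
      (∑ j, ∏ i, (N t).updateCol j (N'.col j) (σ i) i) t := by
    convert HasDerivAt.fun_finsetProd (u := Finset.univ) fun i _ => hN (σ i) i using 2 with j
    rw [← Finset.prod_erase_mul _ _ (Finset.mem_univ j), updateCol_self]
    refine congrArg (· * _) (Finset.prod_congr rfl fun i hi => ?_)
    rw [updateCol_ne (Finset.ne_of_mem_erase hi)]
  simp only [trace_adjugate_mul, det_apply']
  rw [Finset.sum_comm]
  simp only [← Finset.mul_sum]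
  exact HasDerivAt.fun_sum fun σ _ => (hprod σ).const_mul _

end Jacobi

/-- The curve of matrices `N` satisfies the Lax equation `N' = B N - N B` at the point `t`.
Derivatives are taken entrywise, so that no norm on matrices has to be chosen. -/
def HasLaxDerivAt {𝕜 m A : Type*} [NontriviallyNormedField 𝕜] [Fintype m] [NormedCommRing A]
    [NormedAlgebra 𝕜 A] (N : 𝕜 → Matrix m m A) (B : Matrix m m A) (t : 𝕜) : Prop :=
  ∀ i j, HasDerivAt (fun s => N s i j) ((B * N t - N t * B) i j) t

namespace HasLaxDerivAt

variable {𝕜 m A : Type*} [NontriviallyNormedField 𝕜] [Fintype m] [NormedCommRing A]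
  [NormedAlgebra 𝕜 A] {N P : 𝕜 → Matrix m m A} {B : Matrix m m A} {t : 𝕜}

lemma mul (hN : HasLaxDerivAt N B t) (hP : HasLaxDerivAt P B t) :
    HasLaxDerivAt (fun s => N s * P s) B t := by
  intro i j
  have leibniz : B * (N t * P t) - N t * P t * B
      = (B * N t - N t * B) * P t + N t * (B * P t - P t * B) := by noncomm_ring
  rw [leibniz, Matrix.add_apply, mul_apply, mul_apply, ← Finset.sum_add_distrib]
  simp only [mul_apply (M := N _)]
  exact HasDerivAt.fun_sum fun k _ => (hN i k).mul (hP k j)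

lemma trace (hN : HasLaxDerivAt N B t) : HasDerivAt (fun s => (N s).trace) 0 t := by
  have htrace : (B * N t - N t * B).trace = 0 := by
    rw [trace_sub, trace_mul_comm, sub_self]
  rw [← htrace]
  exact HasDerivAt.fun_sum fun i _ => hN i i

variable [DecidableEq m]

lemma pow (hN : HasLaxDerivAt N B t) (k : ℕ) : HasLaxDerivAt (fun s => N s ^ k) B t := by
  induction k with
  | zero => exact fun i j => by simpa using hasDerivAt_const t ((1 : Matrix m m A) i j)
  | succ k ih => simpa only [pow_succ] using ih.mul hN

lemma scalar_sub (hN : HasLaxDerivAt N B t) (x : A) :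
    HasLaxDerivAt (fun s => scalar m x - N s) B t := by
  intro i j
  have hcomm : scalar m x * B = B * scalar m x := (scalar_commute x (Commute.all x) B).eq
  have hbracket : B * (scalar m x - N t) - (scalar m x - N t) * B = -(B * N t - N t * B) := by
    rw [mul_sub, sub_mul, hcomm]
    abel
  rw [hbracket]
  exact (hN i j).const_sub _

lemma det (hN : HasLaxDerivAt N B t) : HasDerivAt (fun s => (N s).det) 0 t := by
  simpa only [trace_adjugate_mul_commutator] using hasDerivAt_det hN

lemma eval_charpoly (hN : HasLaxDerivAt N B t) (x : A) :
    HasDerivAt (fun s => (N s).charpoly.eval x) 0 t := by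
  simpa only [Matrix.eval_charpoly] using (hN.scalar_sub x).det

end HasLaxDerivAt

lemma eq_of_forall_hasDerivAt_zero {𝕜 E : Type*} [RCLike 𝕜] [NormedAddCommGroup E]
    [NormedSpace 𝕜 E] {f : 𝕜 → E} (hf : ∀ t, HasDerivAt f 0 t) (t s : 𝕜) : f t = f s :=
  is_const_of_deriv_eq_zero (fun t => (hf t).differentiableAt) (fun t => (hf t).deriv) t s

section RCLike

variable {𝕜 m A : Type*} [RCLike 𝕜] [Fintype m] [DecidableEq m] [NormedCommRing A]
  [NormedAlgebra 𝕜 A]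

lemma charpoly_eq_of_forall_hasLaxDerivAt {M B : 𝕜 → Matrix m m A}
    (hM : ∀ t, HasLaxDerivAt M (B t) t) (t s : 𝕜) : (M t).charpoly = (M s).charpoly := by
  refine sub_eq_zero.1 (eq_zero_of_forall_eval_algebraMap_eq_zero (K := 𝕜) fun x => ?_)
  rw [Polynomial.eval_sub, sub_eq_zero]
  exact eq_of_forall_hasDerivAt_zero (fun r => (hM r).eval_charpoly (algebraMap 𝕜 A x)) t s

theorem stmt_6_general (M B : 𝕜 → Matrix m m A)
    (hLax : ∀ t i j, HasDerivAt (fun s => M s i j) ((B t * M t - M t * B t) i j) t) :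
    (∀ k : ℕ, ∀ t s : 𝕜, Matrix.trace (M t ^ k) = Matrix.trace (M s ^ k))
    ∧ (∀ t s : 𝕜, (M t).charpoly = (M s).charpoly)
    ∧ (∀ t s : 𝕜, spectrum A (M t) = spectrum A (M s)) := by
  have hM : ∀ t, HasLaxDerivAt M (B t) t := hLax
  have hcharpoly := charpoly_eq_of_forall_hasLaxDerivAt hM
  exact ⟨fun k => eq_of_forall_hasDerivAt_zero fun t => ((hM t).pow k).trace, hcharpoly,
    fun t s => spectrum_eq_of_charpoly_eq (hcharpoly t s)⟩

end RCLike

/-- A Lax equation `M' = BM - MB` is an isospectral deformation: all traces of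
powers of `M(t)`, and hence the characteristic polynomial and spectrum of
`M(t)`, are independent of `t`. -/
theorem stmt_6 (n : ℕ) (M B : ℝ → Matrix (Fin n) (Fin n) ℝ)
    (hLax : ∀ t i j,
      HasDerivAt (fun s => M s i j) ((B t * M t - M t * B t) i j) t) :
    (∀ k : ℕ, ∀ t s : ℝ, Matrix.trace (M t ^ k) = Matrix.trace (M s ^ k))
    ∧ (∀ t s : ℝ, (M t).charpoly = (M s).charpoly)
    ∧ (∀ t s : ℝ, spectrum ℝ (M t) = spectrum ℝ (M s)) :=
  stmt_6_general M B hLax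
end

section
/- Let n ∈ ℕ and let M be a real symmetric invertible n×n matrix that is tridiagonal, i.e. M i j = 0 whenever |i - j| ≥ 2. Let M = Q · R be its QR factorization with Q orthogonal and R upper triangular with strictly positive diagonal entries. Then the QR iterate M₁ = R · Q is again symmetric and tridiagonal: (M₁) i j = 0 whenever |i - j| ≥ 2. -/
open Matrix

/-!
Since `Q = M R⁻¹`, the QR iterate is `R Q = R M R⁻¹`. Both `R` and `R⁻¹` are upper triangular, and
lower bandwidths add under multiplication, so `R Q` has no larger lower bandwidth than `M`. On the
other hand `R Q = Qᴴ M Q` is Hermitian, which turns the bound below the diagonal into a bound on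
both sides.
-/

section Bandwidth

variable {m α K : Type*}

/-- `A` has lower bandwidth at most `p`: its entries more than `p` places below the diagonal vanish.
The position of an index is read off through `b`, as in `Matrix.BlockTriangular`, so that block
bandwidths are covered as well. -/
def HasLowerBandwidth [Zero K] [Add α] [LT α] (A : Matrix m m K) (b : m → α) (p : α) : Prop :=
  ∀ i j, b j + p < b i → A i j = 0

/-- `A` is banded with bandwidth at most `p`: its entries more than `p` places away from the
diagonal vanish, positions being read off through `b`. Tridiagonal matrices are the case `p = 1`
with `b = Fin.val`. -/
def IsBanded [Zero K] [Add α] [LT α] (A : Matrix m m K) (b : m → α) (p : α) : Prop :=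
  ∀ i j, b i + p < b j ∨ b j + p < b i → A i j = 0

theorem hasLowerBandwidth_zero_iff_blockTriangular [Zero K] [AddZeroClass α] [LT α]
    {A : Matrix m m K} {b : m → α} : HasLowerBandwidth A b 0 ↔ A.BlockTriangular b := by
  simp only [HasLowerBandwidth, BlockTriangular, add_zero]

theorem isBanded_iff_hasLowerBandwidth_of_isHermitian [AddMonoid K] [StarAddMonoid K] [Add α]
    [LT α] {A : Matrix m m K} {b : m → α} {p : α} (hA : A.IsHermitian) :
    IsBanded A b p ↔ HasLowerBandwidth A b p := by
  refine ⟨fun h i j hij => h i j (.inr hij), ?_⟩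
  rintro h i j (hij | hij)
  · rw [← hA.apply, h j i hij, star_zero]
  · exact h i j hij

theorem HasLowerBandwidth.mul [NonUnitalNonAssocSemiring K] [Fintype m] [AddSemigroup α]
    [LinearOrder α] [AddRightMono α] {A B : Matrix m m K} {b : m → α} {p q : α}
    (hA : HasLowerBandwidth A b p) (hB : HasLowerBandwidth B b q) :
    HasLowerBandwidth (A * B) b (q + p) := by
  intro i j hij
  rw [mul_apply]
  refine Finset.sum_eq_zero fun k _ => ?_
  rcases lt_or_ge (b k + p) (b i) with hki | hik
  · rw [hA i k hki, zero_mul]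
  · have hjk : b j + q < b k := by
      refine lt_of_add_lt_add_right (a := p) ?_
      calc b j + q + p = b j + (q + p) := add_assoc ..
        _ < b i := hij
        _ ≤ b k + p := hik
    rw [hB k j hjk, mul_zero]

theorem HasLowerBandwidth.conj_of_blockTriangular [CommRing K] [Fintype m] [DecidableEq m]
    [AddMonoid α] [LinearOrder α] [AddRightMono α] {A R : Matrix m m K} {b : m → α} {p : α}
    (hA : HasLowerBandwidth A b p) (hR : R.BlockTriangular b) (hRunit : IsUnit R) :
    HasLowerBandwidth (R * A * R⁻¹) b p := by
  have := hRunit.invertible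
  have hRinv : R⁻¹.BlockTriangular b := blockTriangular_inv_of_blockTriangular hR
  simpa only [zero_add, add_zero] using
    ((hasLowerBandwidth_zero_iff_blockTriangular.mpr hR).mul hA).mul
      (hasLowerBandwidth_zero_iff_blockTriangular.mpr hRinv)

end Bandwidth

theorem stmt_12_general {m α K : Type*} [Fintype m] [DecidableEq m] [CommRing K] [StarRing K]
    [AddMonoid α] [LinearOrder α] [AddRightMono α] {M Q R : Matrix m m K} {b : m → α} {p : α}
    (hM : M.IsHermitian) (hMunit : IsUnit M) (hMband : IsBanded M b p) (hQ : Qᴴ * Q = 1)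
    (hR : R.BlockTriangular b) (hQR : M = Q * R) :
    (R * Q).IsHermitian ∧ IsBanded (R * Q) b p := by
  have hRunit : IsUnit R := by
    rw [hQR] at hMunit
    exact isUnit_of_mul_isUnit_right hMunit
  have hcongr : R * Q = Qᴴ * M * Q := by rw [hQR, ← Matrix.mul_assoc, hQ, Matrix.one_mul]
  have hsim : R * Q = R * M * R⁻¹ := by
    have hRdet : IsUnit R.det := (isUnit_iff_isUnit_det R).mp hRunit
    rw [hQR, Matrix.mul_assoc, mul_nonsing_inv_cancel_right _ _ hRdet]
  have hherm : (R * Q).IsHermitian := hcongr ▸ isHermitian_conjTranspose_mul_mul Q hM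
  refine ⟨hherm, (isBanded_iff_hasLowerBandwidth_of_isHermitian hherm).mpr ?_⟩
  rw [hsim]
  exact ((isBanded_iff_hasLowerBandwidth_of_isHermitian hM).mp hMband).conj_of_blockTriangular
    hR hRunit

/-- The QR step `M ↦ M₁ = R Q` preserves the class of symmetric tridiagonal
matrices: if `M` is symmetric, invertible and tridiagonal with QR factorization
`M = Q R` (`Q` orthogonal, `R` upper triangular with positive diagonal), then
`M₁ = R Q` is symmetric and tridiagonal. -/
theorem stmt_12 (n : ℕ) (M Q R : Matrix (Fin n) (Fin n) ℝ)
    (hsym : Mᵀ = M) (hM : IsUnit M)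
    (htri : ∀ i j : Fin n, (i : ℕ) + 2 ≤ (j : ℕ) ∨ (j : ℕ) + 2 ≤ (i : ℕ) → M i j = 0)
    (hQ : Qᵀ * Q = 1)
    (hR : ∀ i j : Fin n, j < i → R i j = 0)
    (hRpos : ∀ i : Fin n, 0 < R i i)
    (hQR : M = Q * R)
    (M₁ : Matrix (Fin n) (Fin n) ℝ) (hM₁ : M₁ = R * Q) :
    M₁ᵀ = M₁
    ∧ ∀ i j : Fin n, (i : ℕ) + 2 ≤ (j : ℕ) ∨ (j : ℕ) + 2 ≤ (i : ℕ) → M₁ i j = 0 := by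
  subst hM₁
  -- Definitionally, `star` is the identity on `ℝ` and `i + 1 < j` is `i + 2 ≤ j` on `ℕ`.
  exact stmt_12_general (b := Fin.val) (p := 1) hsym hM htri hQ hR hQR
end
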